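/- Let J be a Jordan algebra over a field of characteristic zero and let q ∈ J. Define the q-isotope product on J by u ·_q v = (uq)v + u(qv) - (uv)q. If q is invertible (in particular if q² = 1), then J with the product ·_q is again a Jordan algebra. -/

import Mathlib

/-- The `q`-isotope product `u ·_q v = (uq)v + u(qv) - (uv)q`. -/
def isoMul {J : Type*} [NonUnitalNonAssocCommRing J] (q u v : J) : J :=
  (u * q) * v + u * (q * v) - (u * v) * q

/-!
Write `L_x` for multiplication by `x` and `V_{x,y} = L_{xy} + [L_x, L_y]`, so that the isotope
product is `u ·_q v = V_{u,q} v` and its Jordan identity says that `V_{u,q}` commutes with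
`V_{p,q}`, where `p = V_{u,q} u`. The linearised Jordan identity makes `[L_x, L_y]` a derivation,
which gives the five-linear identity `[V_{a,b}, V_{x,y}] = V_{V_{a,b} x, y} - V_{x, V_{b,a} y}`.
Evaluating `[V_{u,q}, V_{p,q}]` by it in three ways yields values `X - Y`, `Y - Z` and `Z - X`,
whose sum is zero; hence `3 [V_{u,q}, V_{p,q}] = 0`.
-/

section JordanTriple

attribute [local instance] LieRing.ofAssociativeRing

local notation "L" => AddMonoid.End.mulLeft

variable {J : Type*} [NonUnitalNonAssocCommRing J]

/-- The operator `V_{x,y} = L_{xy} + [L_x, L_y]`, that is `z ↦ {x y z}` for the Jordan triple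
product `{x y z} = (xy)z + x(yz) - y(xz)`, normalised without the customary factor `2`.
Taking it as an operator lets the identities of the triple product be read as commutator
formulas. -/
def jordanV (x y : J) : AddMonoid.End J := L (x * y) + ⁅L x, L y⁆

theorem jordanV_apply (x y z : J) : jordanV x y z = x * y * z + (x * (y * z) - y * (x * z)) := rfl

theorem jordanV_add_left (x x' y : J) : jordanV (x + x') y = jordanV x y + jordanV x' y := by
  simp only [jordanV, add_mul, map_add, add_lie]
  abel

theorem jordanV_sub_right (x y y' : J) : jordanV x (y - y') = jordanV x y - jordanV x y' := by
  simp only [jordanV, mul_sub, map_sub, lie_sub]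
  abel

theorem jordanV_eq_mulLeft_sub_lie (x y : J) : jordanV y x = L (x * y) - ⁅L x, L y⁆ := by
  rw [jordanV, mul_comm y x, ← lie_skew (L x) (L y), sub_neg_eq_add]

theorem jordanV_apply_comm (x y z : J) : jordanV x y z = jordanV z y x := by
  rw [jordanV_apply, jordanV_apply, mul_comm (x * y) z, mul_comm (z * y) x, mul_comm x y,
    mul_comm z y, mul_comm z x]
  abel

theorem isoMul_eq_jordanV (q u v : J) : isoMul q u v = jordanV u q v := by
  rw [isoMul, jordanV_apply, mul_comm (u * v) q, add_sub_assoc]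

variable [IsCommJordan J]

theorem lie_mulLeft_mul_add_add_eq_zero (h2 : IsSMulRegular J (2 : ℕ)) (a b c : J) :
    ⁅L a, L (b * c)⁆ + ⁅L b, L (c * a)⁆ + ⁅L c, L (a * b)⁆ = 0 := by
  ext d
  refine h2.right_eq_zero_of_smul ?_
  exact DFunLike.congr_fun (two_nsmul_lie_lmul_lmul_add_add_eq_zero a b c) d

theorem lie_lie_mulLeft (h2 : IsSMulRegular J (2 : ℕ)) (a b c : J) :
    ⁅⁅L a, L b⁆, L c⁆ = L (⁅L a, L b⁆ c) := by
  ext d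
  have ha : b * (c * d * a) - c * d * (b * a) + (c * (d * b * a) - d * b * (c * a))
      + (d * (b * c * a) - b * c * (d * a)) = 0 :=
    DFunLike.congr_fun (lie_mulLeft_mul_add_add_eq_zero h2 b c d) a
  have hb : a * (c * d * b) - c * d * (a * b) + (c * (d * a * b) - d * a * (c * b))
      + (d * (a * c * b) - a * c * (d * b)) = 0 :=
    DFunLike.congr_fun (lie_mulLeft_mul_add_add_eq_zero h2 a c d) b
  change a * (b * (c * d)) - b * (a * (c * d)) - c * (a * (b * d) - b * (a * d))
    = (a * (b * c) - b * (a * c)) * d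
  simp only [mul_sub, sub_mul]
  linear_combination (norm := (simp only [mul_comm]; abel)) hb - ha

theorem lie_lie_jordanV (h2 : IsSMulRegular J (2 : ℕ)) (a b x y : J) :
    ⁅⁅L a, L b⁆, jordanV x y⁆ = jordanV (⁅L a, L b⁆ x) y + jordanV x (⁅L a, L b⁆ y) := by
  have leibniz_mul : ⁅L a, L b⁆ (x * y) = ⁅L a, L b⁆ x * y + x * ⁅L a, L b⁆ y := by
    have h := DFunLike.congr_fun (lie_lie_mulLeft h2 a b x) y
    exact sub_eq_iff_eq_add.mp h
  rw [jordanV, lie_add, leibniz_lie, lie_lie_mulLeft h2, lie_lie_mulLeft h2,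
    lie_lie_mulLeft h2, leibniz_mul, map_add, jordanV, jordanV]
  abel

theorem lie_mulLeft_jordanV (h2 : IsSMulRegular J (2 : ℕ)) (c x y : J) :
    ⁅L c, jordanV x y⁆ = jordanV (c * x) y - jordanV x (c * y) := by
  have lie_mul : ⁅L c, L (x * y)⁆ = ⁅L (c * x), L y⁆ - ⁅L x, L (c * y)⁆ := by
    rw [← lie_skew (L (c * x)), mul_comm c y, ← sub_eq_zero,
      ← lie_mulLeft_mul_add_add_eq_zero h2 c x y]
    abel
  have lie_lie_apply : ⁅L c, ⁅L x, L y⁆⁆ = L (c * x * y) - L (x * (c * y)) := by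
    rw [← lie_skew, lie_lie_mulLeft h2, ← map_neg, ← map_sub]
    congr 1
    change -(x * (y * c) - y * (x * c)) = _
    rw [neg_sub, mul_comm y, mul_comm x c, mul_comm y c]
  rw [jordanV, lie_add, lie_mul, lie_lie_apply, jordanV, jordanV]
  abel

theorem lie_jordanV_jordanV (h2 : IsSMulRegular J (2 : ℕ)) (a b x y : J) :
    ⁅jordanV a b, jordanV x y⁆ = jordanV (jordanV a b x) y - jordanV x (jordanV b a y) := by
  have hx : jordanV a b x = a * b * x + ⁅L a, L b⁆ x := rfl
  have hy : jordanV b a y = a * b * y - ⁅L a, L b⁆ y :=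
    DFunLike.congr_fun (jordanV_eq_mulLeft_sub_lie a b) y
  rw [hx, hy, jordanV_add_left, jordanV_sub_right, jordanV, add_lie,
    lie_mulLeft_jordanV h2, lie_lie_jordanV h2]
  abel

theorem jordanV_apply_self_shift (h2 : IsSMulRegular J (2 : ℕ)) (u q : J) :
    jordanV (jordanV u q u) q = jordanV u (jordanV q u q) := by
  rw [← sub_eq_zero, ← lie_jordanV_jordanV h2, lie_self]

theorem three_nsmul_lie_jordanV_eq_zero (h2 : IsSMulRegular J (2 : ℕ)) (u q : J) :
    3 • ⁅jordanV u q, jordanV (jordanV u q u) q⁆ = 0 := by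
  set p := jordanV u q u with hp
  set r := jordanV q u q
  have hpq : jordanV p q = jordanV u r := jordanV_apply_self_shift h2 u q
  have hqp : jordanV q p q = jordanV q u r := by
    rw [hp, ← jordanV_apply_self_shift h2 q u, jordanV_apply_comm]
  have h₁ : ⁅jordanV u q, jordanV p q⁆ = jordanV (jordanV u q p) q - jordanV p r :=
    lie_jordanV_jordanV h2 u q p q
  have h₂ : ⁅jordanV u q, jordanV p q⁆ = jordanV p r - jordanV u (jordanV q u r) := by
    rw [hpq, lie_jordanV_jordanV h2]
  have h₃ : -⁅jordanV u q, jordanV p q⁆ =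
      jordanV (jordanV u q p) q - jordanV u (jordanV q u r) := by
    rw [lie_skew, lie_jordanV_jordanV h2, jordanV_apply_comm p q u, hqp]
  linear_combination (norm := abel) h₁ + h₂ - h₃

theorem commute_jordanV_apply_self (h2 : IsSMulRegular J (2 : ℕ))
    (h3 : IsSMulRegular J (3 : ℕ)) (u q : J) :
    Commute (jordanV u q) (jordanV (jordanV u q u) q) := by
  rw [commute_iff_lie_eq]
  ext v
  exact h3.right_eq_zero_of_smul (DFunLike.congr_fun (three_nsmul_lie_jordanV_eq_zero h2 u q) v)

end JordanTriple

theorem isotope_isJordan_general {J : Type*} [NonUnitalNonAssocCommRing J] [IsCommJordan J]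
    (h2 : IsSMulRegular J (2 : ℕ)) (h3 : IsSMulRegular J (3 : ℕ)) (q : J) :
    (∀ u v, isoMul q u v = isoMul q v u) ∧
    (∀ u v, isoMul q (isoMul q (isoMul q u u) v) u
      = isoMul q (isoMul q u u) (isoMul q v u)) := by
  simp only [isoMul_eq_jordanV]
  refine ⟨fun u v => jordanV_apply_comm u q v, fun u v => ?_⟩
  rw [jordanV_apply_comm _ q u, jordanV_apply_comm v q u]
  exact DFunLike.congr_fun (commute_jordanV_apply_self h2 h3 u q).eq v

/-- If `q` is an invertible element of a unital Jordan algebra `J` over a field of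
characteristic zero (invertibility meaning `∃ r, qr = 1 ∧ q²r = q`; in particular
this holds if `q² = 1`), then `J` with the `q`-isotope product is again a Jordan
algebra: the product is commutative and satisfies the Jordan identity. -/
theorem isotope_isJordan (F : Type*) [Field F] [CharZero F]
    (J : Type*) [NonUnitalNonAssocCommRing J] [Module F J]
    [IsScalarTower F J J] [SMulCommClass F J J] [IsCommJordan J]
    (e : J) (he : ∀ x, e * x = x)
    (q : J) (hq : ∃ r, q * r = e ∧ (q * q) * r = q) :
    (∀ u v, isoMul q u v = isoMul q v u) ∧
    (∀ u v, isoMul q (isoMul q (isoMul q u u) v) u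
      = isoMul q (isoMul q u u) (isoMul q v u)) := by
  have : IsAddTorsionFree J := .of_isTorsionFree F J
  exact isotope_isJordan_general (nsmul_right_injective two_ne_zero)
    (nsmul_right_injective three_ne_zero) q
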